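/- For 0 < r < n, the normalized (n-1)-dimensional volume of the matroid base polytope of the minimal matroid T_{r,n} equals C(n-2, r-1). -/

import Mathlib

open MeasureTheory

/-!
Exchanging one element shows that the bases of `T_{r,n}` are `{1, …, r}` and the sets obtained from
it by trading some `i ≤ r` for some `j > r`. Forget `x_n`, take `t ∈ {0, 1}`, the number of traded
elements, as a coordinate in place of `x_1`, and replace `x_i` by `1 - x_i` for `1 < i ≤ r`. This is
a volume-preserving affine change of coordinates, and it turns the projected polytope into the
pyramid over `Δ_{r-1} × Δ_{n-r-1}`, where each `Δ_d` is the corner simplex with vertices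
`0, e_1, …, e_d`. A pyramid over a `d`-dimensional base has volume `1 / (d + 1)` times that of the
base. The corner simplex is itself an iterated pyramid, so its volume is `1 / d!`.
-/

open Module Set
open scoped Pointwise

section Exchange

variable {α : Type*} [DecidableEq α]

lemma exists_eq_insert_erase_of_card_sdiff_eq_one {A B : Finset α} (hcard : B.card = A.card)
    (hone : (B \ A).card = 1) : ∃ i ∈ A, ∃ j ∈ B \ A, B = insert j (A.erase i) := by
  obtain ⟨j, hj⟩ := Finset.card_eq_one.1 hone
  obtain ⟨i, hi⟩ := Finset.card_eq_one.1 ((Finset.card_sdiff_comm hcard).symm.trans hone)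
  have hjmem : j ∈ B \ A := by simp [hj]
  have himem : i ∈ A \ B := by simp [hi]
  refine ⟨i, (Finset.mem_sdiff.1 himem).1, j, hjmem, ?_⟩
  calc B = (B \ A) ∪ (A \ (A \ B)) := by grind
    _ = insert j (A.erase i) := by rw [hj, hi, Finset.sdiff_singleton_eq_erase]; rfl

lemma setOf_card_inter_le_one_eq {A C : Finset α} (hAC : Disjoint A C) :
    {B : Finset α | B ⊆ A ∪ C ∧ B.card = A.card ∧ (B ∩ C).card ≤ 1} =
      insert A (image2 (fun i j => insert j (A.erase i)) A C) := by
  ext B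
  constructor
  · rintro ⟨hB, hcard, hle⟩
    have hsdiff : B \ A = B ∩ C := by grind [Finset.disjoint_left]
    rcases Nat.le_one_iff_eq_zero_or_eq_one.1 hle with hzero | hone
    · rw [← hsdiff, Finset.card_eq_zero, Finset.sdiff_eq_empty_iff_subset] at hzero
      exact .inl (Finset.eq_of_subset_of_card_le hzero hcard.ge)
    · obtain ⟨i, hi, j, hj, rfl⟩ :=
        exists_eq_insert_erase_of_card_sdiff_eq_one hcard (hsdiff ▸ hone)
      exact .inr ⟨i, hi, j, (Finset.mem_inter.1 (hsdiff ▸ hj)).2, rfl⟩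
  · rintro (rfl | ⟨i, hi, j, hj, rfl⟩)
    · simp [Finset.disjoint_iff_inter_eq_empty.1 hAC]
    · have hi : i ∈ A := hi
      have hj : j ∈ C := hj
      have hjA : j ∉ A := Finset.disjoint_right.1 hAC hj
      refine ⟨by grind, by grind, ?_⟩
      have hinter : insert j (A.erase i) ∩ C = {j} := by grind [Finset.disjoint_left]
      simp [hinter]

end Exchange

section Pyramid

section Module

variable {E : Type*} [AddCommGroup E] [Module ℝ E]

/-- The pyramid of height `1` with apex `0` over the base `{1} × S`, parametrized by its slices
`{t} × t • S`. -/
def pyramid (S : Set E) : Set (ℝ × E) :=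
  (fun p : ℝ × E => (p.1, p.1 • p.2)) '' (Icc 0 1 ×ˢ S)

lemma convexHull_insert_zero_singleton_one_prod {S : Set E} (hS : S.Nonempty) :
    convexHull ℝ (insert 0 ({1} ×ˢ S) : Set (ℝ × E)) = pyramid (convexHull ℝ S) := by
  rw [convexHull_insert ((singleton_nonempty 1).prod hS), convexHull_prod, convexHull_singleton,
    convexJoin_singleton_left]
  ext ⟨t, x⟩
  simp only [pyramid, segment_eq_image, singleton_prod, smul_zero, zero_add, mem_iUnion, mem_image,
    mem_prod, exists_prop, Prod.exists, Prod.mk.injEq, Prod.smul_mk]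
  aesop

lemma preimage_mk_pyramid (S : Set E) (t : ℝ) :
    Prod.mk t ⁻¹' pyramid S = if t ∈ Icc 0 1 then t • S else ∅ := by
  ext x
  split_ifs with ht <;>
    simp only [pyramid, mem_preimage, mem_image, mem_prod, Prod.exists, Prod.mk.injEq,
      mem_smul_set] <;>
    aesop

lemma isCompact_pyramid [TopologicalSpace E] [ContinuousSMul ℝ E] {S : Set E}
    (hS : IsCompact S) : IsCompact (pyramid S) :=
  (isCompact_Icc.prod hS).image (by fun_prop)

end Module

lemma lintegral_Icc_zero_one_pow (d : ℕ) :
    ∫⁻ t in Icc (0 : ℝ) 1, ENNReal.ofReal (t ^ d) = ENNReal.ofReal (1 / (d + 1)) := by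
  have hint : IntegrableOn (fun t : ℝ => t ^ d) (Icc 0 1) :=
    (continuous_pow d).continuousOn.integrableOn_Icc
  have hnonneg : ∀ᵐ t ∂volume.restrict (Icc (0 : ℝ) 1), 0 ≤ t ^ d :=
    ae_restrict_of_forall_mem measurableSet_Icc fun t ht => pow_nonneg ht.1 d
  rw [← ofReal_integral_eq_lintegral_ofReal hint hnonneg, integral_Icc_eq_integral_Ioc,
    ← intervalIntegral.integral_of_le zero_le_one, integral_pow, one_pow, zero_pow d.succ_ne_zero,
    sub_zero]

variable {E : Type*} [NormedAddCommGroup E] [NormedSpace ℝ E] [FiniteDimensional ℝ E]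
  [MeasurableSpace E] [BorelSpace E] (μ : Measure E) [μ.IsAddHaarMeasure]

theorem measureReal_pyramid {S : Set E} (hS : IsCompact S) :
    ((volume : Measure ℝ).prod μ).real (pyramid S) = μ.real S / (finrank ℝ E + 1) := by
  have hslice (t : ℝ) : μ (Prod.mk t ⁻¹' pyramid S) =
      (Icc 0 1).indicator (fun t => ENNReal.ofReal (t ^ finrank ℝ E) * μ S) t := by
    rw [preimage_mk_pyramid]
    by_cases ht : t ∈ Icc (0 : ℝ) 1
    · rw [if_pos ht, indicator_of_mem ht, Measure.addHaar_smul_of_nonneg μ ht.1]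
    · rw [if_neg ht, indicator_of_notMem ht, measure_empty]
  have hvol : (volume.prod μ) (pyramid S) = ENNReal.ofReal (1 / (finrank ℝ E + 1)) * μ S := by
    rw [Measure.prod_apply (isCompact_pyramid hS).measurableSet, lintegral_congr hslice,
      lintegral_indicator measurableSet_Icc, lintegral_mul_const _ (by fun_prop),
      lintegral_Icc_zero_one_pow]
  rw [measureReal_def, hvol, ENNReal.toReal_mul, ENNReal.toReal_ofReal (by positivity),
    ← measureReal_def, one_div_mul_eq_div]

theorem measureReal_convexHull_image_insert_zero_prod {F : Type*} [NormedAddCommGroup F]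
    [NormedSpace ℝ F] [MeasurableSpace F] [BorelSpace F] {ν : Measure F} {A : ℝ × E →ᵃ[ℝ] F}
    (hA : MeasurePreserving A (volume.prod μ) ν) (hinj : Function.Injective A) {S : Set E}
    (hS : S.Finite) (hne : S.Nonempty) :
    ν.real (convexHull ℝ (A '' insert 0 ({1} ×ˢ S))) =
      μ.real (convexHull ℝ S) / (finrank ℝ E + 1) := by
  have hemb : MeasurableEmbedding A := A.continuous_of_finiteDimensional.measurableEmbedding hinj
  rw [← AffineMap.image_convexHull, convexHull_insert_zero_singleton_one_prod hne,
    ← measureReal_pyramid μ (hS.isCompact_convexHull ℝ), measureReal_def, measureReal_def,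
    ← hA.measure_preimage_emb hemb, preimage_image_eq _ hinj]

end Pyramid

section Shear

lemma measurePreserving_finCons (n : ℕ) :
    MeasurePreserving (fun p : ℝ × (Fin n → ℝ) => (Fin.cons p.1 p.2 : Fin (n + 1) → ℝ)) := by
  convert (volume_preserving_piFinSuccAbove (fun _ : Fin (n + 1) => ℝ) 0).symm using 1
  ext p : 1
  exact (Fin.insertNth_zero (α := fun _ => ℝ) p.1 p.2).symm

lemma measurePreserving_finAppend (m n : ℕ) :
    MeasurePreserving (fun p : (Fin m → ℝ) × (Fin n → ℝ) => Fin.append p.1 p.2) := by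
  have happend (p : (Fin m → ℝ) × (Fin n → ℝ)) :
      MeasurableEquiv.piCongrLeft (fun _ => ℝ) finSumFinEquiv
        ((MeasurableEquiv.sumPiEquivProdPi fun _ : Fin m ⊕ Fin n => ℝ).symm p) =
      Fin.append p.1 p.2 := by
    ext i
    obtain ⟨i, rfl⟩ := finSumFinEquiv.surjective i
    rw [MeasurableEquiv.coe_piCongrLeft, Equiv.piCongrLeft_apply_apply]
    cases i <;> simp [MeasurableEquiv.sumPiEquivProdPi, Equiv.sumPiEquivProdPi]
  have h := (volume_measurePreserving_piCongrLeft (fun _ => ℝ)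
    (finSumFinEquiv (m := m) (n := n))).comp (volume_measurePreserving_sumPiEquivProdPi_symm _)
  exact funext happend ▸ h

section Module

variable {E : Type*} [AddCommGroup E] [Module ℝ E] {n : ℕ}

/-- The affine map `(t, x) ↦ (c x - t, f x)`: a reflected and sheared first coordinate `t` on top of
a chart `f` of the remaining ones. -/
def shearCons (c : E →ᵃ[ℝ] ℝ) (f : E →ᵃ[ℝ] (Fin n → ℝ)) : ℝ × E →ᵃ[ℝ] (Fin (n + 1) → ℝ) :=
  (Fin.consLinearEquiv ℝ fun _ : Fin (n + 1) => ℝ).toLinearMap.toAffineMap.comp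
    ((c.comp AffineMap.snd - AffineMap.fst).prod (f.comp AffineMap.snd))

lemma shearCons_apply (c : E →ᵃ[ℝ] ℝ) (f : E →ᵃ[ℝ] (Fin n → ℝ)) (p : ℝ × E) :
    shearCons c f p = Fin.cons (c p.2 - p.1) (f p.2) := rfl

lemma shearCons_injective (c : E →ᵃ[ℝ] ℝ) {f : E →ᵃ[ℝ] (Fin n → ℝ)} (hf : Function.Injective f) :
    Function.Injective (shearCons c f) := by
  rintro ⟨t, x⟩ ⟨t', x'⟩ h
  simp only [shearCons_apply, Fin.cons_inj] at h
  obtain rfl : x = x' := hf h.2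
  rw [sub_right_injective h.1]

end Module

lemma measurePreserving_shearCons {E : Type*} [NormedAddCommGroup E] [NormedSpace ℝ E]
    [FiniteDimensional ℝ E] [MeasurableSpace E] [BorelSpace E] {μ : Measure E} [SFinite μ] {n : ℕ}
    (c : E →ᵃ[ℝ] ℝ) {f : E →ᵃ[ℝ] (Fin n → ℝ)} (hf : MeasurePreserving f μ) :
    MeasurePreserving (shearCons c f) (volume.prod μ) := by
  have hc : Measurable fun p : E × ℝ => c p.1 - p.2 :=
    ((c.continuous_of_finiteDimensional.comp continuous_fst).sub continuous_snd).measurable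
  have hskew : MeasurePreserving (fun p : E × ℝ => (f p.1, c p.1 - p.2)) (μ.prod volume) :=
    hf.skew_product (g := fun x t => c x - t) hc
      (ae_of_all _ fun x => (Measure.measurePreserving_sub_left volume (c x)).map_eq)
  exact (measurePreserving_finCons n).comp
    (Measure.measurePreserving_swap.comp (hskew.comp Measure.measurePreserving_swap))

end Shear

section CornerSimplex

/-- The vertices `0, e_1, …, e_n` of the corner simplex `Δ_n`, the full-dimensional copy of the
standard simplex in `ℝ^n`. -/
def cornerVertices (n : ℕ) : Set (Fin n → ℝ) :=
  insert 0 (range fun i => Pi.single i 1)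

lemma finite_cornerVertices (n : ℕ) : (cornerVertices n).Finite :=
  (finite_range _).insert _

lemma nonempty_cornerVertices (n : ℕ) : (cornerVertices n).Nonempty :=
  insert_nonempty _ _

lemma range_tail_single (n : ℕ) :
    range (fun i : Fin (n + 1) => Fin.tail (α := fun _ => ℝ) (Pi.single i 1)) =
      cornerVertices n := by
  rw [Fin.range_fin_succ, cornerVertices]
  congr! 3
  all_goals
    ext j
    simp [Fin.tail, Pi.single_apply]

lemma range_init_single (n : ℕ) :
    range (fun i : Fin (n + 1) => Fin.init (α := fun _ => ℝ) (Pi.single i 1)) =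
      cornerVertices n := by
  rw [← Fin.snoc_init_self fun i : Fin (n + 1) => Fin.init (α := fun _ => ℝ) (Pi.single i 1),
    Fin.range_snoc, cornerVertices]
  congr! 3
  all_goals
    ext j
    simp [Fin.init, Pi.single_apply]

lemma cornerVertices_succ (n : ℕ) :
    cornerVertices (n + 1) = insert (Pi.single 0 1) (Fin.cons 0 '' cornerVertices n) := by
  rw [cornerVertices, cornerVertices, image_insert_eq, ← range_comp, Fin.range_fin_succ,
    insert_comm]
  congr! 3
  · ext i
    cases i using Fin.cases <;> simp
  · ext j i
    cases i using Fin.cases <;> simp [Fin.tail, Pi.single_apply]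

lemma image_shearCons_cornerVertices (n : ℕ) :
    shearCons (AffineMap.const ℝ _ 1) (AffineMap.id ℝ (Fin n → ℝ)) ''
      insert 0 ({1} ×ˢ cornerVertices n) = cornerVertices (n + 1) := by
  rw [cornerVertices_succ, image_insert_eq, singleton_prod, image_image]
  congr! 2 with x
  · ext i
    cases i using Fin.cases <;> simp [shearCons_apply]
  · simp [shearCons_apply]

theorem volume_real_convexHull_cornerVertices (n : ℕ) :
    volume.real (convexHull ℝ (cornerVertices n)) = 1 / n.factorial := by
  induction n with
  | zero =>
    simp [Subsingleton.eq_univ_of_nonempty (nonempty_cornerVertices 0), measureReal_def, volume_pi]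
  | succ n ih =>
    rw [← image_shearCons_cornerVertices, measureReal_convexHull_image_insert_zero_prod volume
      (measurePreserving_shearCons _ (.id volume)) (shearCons_injective _ Function.injective_id)
      (finite_cornerVertices n) (nonempty_cornerVertices n), ih, finrank_fin_fun,
      Nat.factorial_succ]
    push_cast
    field_simp

theorem volume_real_convexHull_cornerVertices_prod (k s : ℕ) :
    volume.real (convexHull ℝ (cornerVertices k ×ˢ cornerVertices s)) =
      1 / (k.factorial * s.factorial) := by
  rw [convexHull_prod, Measure.volume_eq_prod, measureReal_prod_prod,
    volume_real_convexHull_cornerVertices, volume_real_convexHull_cornerVertices,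
    one_div_mul_one_div]

end CornerSimplex

section MinimalMatroid

/-- The affine map `(u, y) ↦ (1 - u, y)`, which reads `u` as the indicator vector of the elements
removed from `{2, …, k + 1}` and `y` as that of the elements added. -/
noncomputable def reflectAppend (k s : ℕ) :
    (Fin k → ℝ) × (Fin s → ℝ) →ᵃ[ℝ] (Fin (k + s) → ℝ) :=
  AffineMap.pi (Fin.append
    (fun i => AffineMap.const ℝ _ 1 - (LinearMap.proj i ∘ₗ LinearMap.fst ℝ _ _).toAffineMap)
    (fun j => (LinearMap.proj j ∘ₗ LinearMap.snd ℝ _ _).toAffineMap))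

lemma reflectAppend_apply (k s : ℕ) (p : (Fin k → ℝ) × (Fin s → ℝ)) :
    reflectAppend k s p = Fin.append (1 - p.1) p.2 := by
  ext i
  cases i using Fin.addCases <;> simp [reflectAppend]

lemma reflectAppend_injective (k s : ℕ) : Function.Injective (reflectAppend k s) := by
  intro p q h
  simp only [reflectAppend_apply] at h
  obtain ⟨hu, hy⟩ := Prod.ext_iff.1 <|
    (Fin.appendEquiv k s).injective (a₁ := (1 - p.1, p.2)) (a₂ := (1 - q.1, q.2)) h
  exact Prod.ext (sub_right_injective hu) hy

lemma measurePreserving_reflectAppend (k s : ℕ) : MeasurePreserving (reflectAppend k s) := by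
  have h := (measurePreserving_finAppend k s).comp
    ((Measure.measurePreserving_sub_left volume (1 : Fin k → ℝ)).prod (.id volume))
  exact (funext (reflectAppend_apply k s)) ▸ h

/-- The coordinates `(t, u, y)` in which the polytope of `T_{k+1,k+s+2}`, projected along its last
coordinate, is the pyramid over `Δ_k × Δ_s`. The first entry `1 + ∑ u_i - t` is the indicator of
`1`: of `t` removed elements, `∑ u_i` are different from `1`. -/
noncomputable def minimalMatroidChart (k s : ℕ) :
    ℝ × ((Fin k → ℝ) × (Fin s → ℝ)) →ᵃ[ℝ] (Fin (k + s + 1) → ℝ) :=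
  shearCons (AffineMap.const ℝ _ 1 +
    ((∑ i, LinearMap.proj i) ∘ₗ LinearMap.fst ℝ (Fin k → ℝ) (Fin s → ℝ)).toAffineMap)
    (reflectAppend k s)

lemma minimalMatroidChart_apply (k s : ℕ) (t : ℝ) (u : Fin k → ℝ) (y : Fin s → ℝ) :
    minimalMatroidChart k s (t, (u, y)) =
      Fin.cons (1 + ∑ i, u i - t) (Fin.append (1 - u) y) := by
  simp [minimalMatroidChart, shearCons_apply, reflectAppend_apply]

/-- The indicator vector `e_B` of `B ⊆ {1, 2, …}`, truncated to its first `d` coordinates; entry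
`i : Fin d` corresponds to the element `i + 1`. -/
def indicatorVector (d : ℕ) (B : Finset ℕ) : Fin d → ℝ :=
  fun i => if i.val + 1 ∈ B then 1 else 0

lemma minimalMatroidChart_zero (k s : ℕ) :
    minimalMatroidChart k s 0 = indicatorVector (k + s + 1) (Finset.Icc 1 (k + 1)) := by
  rw [← Prod.mk_zero_zero, ← Prod.mk_zero_zero, minimalMatroidChart_apply]
  ext x
  cases x using Fin.cases with
  | zero => simp [indicatorVector]
  | succ x => cases x using Fin.addCases <;> simp [indicatorVector]

lemma minimalMatroidChart_one_single (k s : ℕ) (i : Fin (k + 1)) (j : Fin (s + 1)) :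
    minimalMatroidChart k s (1, (Fin.tail (α := fun _ => ℝ) (Pi.single i 1),
        Fin.init (α := fun _ => ℝ) (Pi.single j 1))) =
      indicatorVector (k + s + 1)
        (insert (k + 2 + j.val) ((Finset.Icc 1 (k + 1)).erase (i.val + 1))) := by
  rw [minimalMatroidChart_apply]
  ext x
  cases x using Fin.cases with
  | zero =>
    have hsum : ∑ i', Fin.tail (α := fun _ => ℝ) (Pi.single i 1) i' =
        1 - Pi.single (M := fun _ => ℝ) i 1 0 := by
      rw [eq_sub_iff_add_eq', Fin.tail_def, ← Fin.sum_univ_succ, Fintype.sum_pi_single']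
    rw [Fin.cons_zero, hsum, indicatorVector, Pi.single_apply]
    simp only [Fin.ext_iff, Fin.val_zero, Finset.mem_insert, Finset.mem_erase, Finset.mem_Icc]
    split_ifs <;> first | omega | norm_num
  | succ x => cases x using Fin.addCases with
    | left x =>
      rw [Fin.cons_succ, Fin.append_left, indicatorVector, Pi.sub_apply, Fin.tail, Pi.single_apply]
      simp only [Fin.ext_iff, Fin.val_succ, Fin.val_castAdd, Finset.mem_insert, Finset.mem_erase,
        Finset.mem_Icc, Pi.one_apply]
      split_ifs <;> first | omega | norm_num
    | right x =>
      rw [Fin.cons_succ, Fin.append_right, indicatorVector, Fin.init, Pi.single_apply]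
      simp only [Fin.ext_iff, Fin.val_succ, Fin.val_natAdd, Fin.val_castSucc, Finset.mem_insert,
        Finset.mem_erase, Finset.mem_Icc]
      split_ifs <;> first | omega | rfl

lemma setOf_minimalMatroid_bases (k s : ℕ) :
    {B : Finset ℕ | B ⊆ Finset.Icc 1 (k + s + 2) ∧ B.card = k + 1 ∧
        (B ∩ Finset.Ioc (k + 1) (k + s + 2)).card ≤ 1} =
      insert (Finset.Icc 1 (k + 1)) (range fun p : Fin (k + 1) × Fin (s + 1) =>
        insert (k + 2 + p.2.val) ((Finset.Icc 1 (k + 1)).erase (p.1.val + 1))) := by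
  have hdisj : Disjoint (Finset.Icc 1 (k + 1)) (Finset.Ioc (k + 1) (k + s + 2)) := by
    grind [Finset.disjoint_left]
  have hunion : Finset.Icc 1 (k + 1) ∪ Finset.Ioc (k + 1) (k + s + 2) =
      Finset.Icc 1 (k + s + 2) := by
    grind
  have hA : (Finset.Icc 1 (k + 1) : Set ℕ) = range fun i : Fin (k + 1) => i.val + 1 := by
    ext x
    simp only [Finset.coe_Icc, mem_Icc, mem_range, Fin.exists_iff]
    exact ⟨fun h => ⟨x - 1, by omega, by omega⟩, by rintro ⟨i, hi, rfl⟩; omega⟩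
  have hC : (Finset.Ioc (k + 1) (k + s + 2) : Set ℕ) =
      range fun j : Fin (s + 1) => k + 2 + j.val := by
    ext x
    simp only [Finset.coe_Ioc, mem_Ioc, mem_range, Fin.exists_iff]
    exact ⟨fun h => ⟨x - (k + 2), by omega, by omega⟩, by rintro ⟨i, hi, rfl⟩; omega⟩
  have hbases := setOf_card_inter_le_one_eq hdisj
  rwa [hunion, Nat.card_Icc, Nat.add_sub_cancel, hA, hC, image2_range] at hbases

lemma indicatorVector_image_minimalMatroid_bases (k s : ℕ) :
    indicatorVector (k + s + 1) ''
        {B | B ⊆ Finset.Icc 1 (k + s + 2) ∧ B.card = k + 1 ∧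
          (B ∩ Finset.Ioc (k + 1) (k + s + 2)).card ≤ 1} =
      minimalMatroidChart k s '' insert 0 ({1} ×ˢ (cornerVertices k ×ˢ cornerVertices s)) := by
  rw [setOf_minimalMatroid_bases, image_insert_eq, image_insert_eq, minimalMatroidChart_zero,
    ← range_tail_single, ← range_init_single, ← range_prodMap, singleton_prod, image_image,
    ← range_comp, ← range_comp]
  congr! 2
  funext p
  exact (minimalMatroidChart_one_single k s p.1 p.2).symm

theorem volume_real_convexHull_image_minimalMatroidChart (k s : ℕ) :
    volume.real (convexHull ℝ (minimalMatroidChart k s ''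
        insert 0 ({1} ×ˢ (cornerVertices k ×ˢ cornerVertices s)))) =
      1 / (k.factorial * s.factorial) / (k + s + 1) := by
  have : (volume : Measure ((Fin k → ℝ) × (Fin s → ℝ))).IsAddHaarMeasure :=
    Measure.prod.instIsAddHaarMeasure _ _
  have hchart : MeasurePreserving (minimalMatroidChart k s) :=
    measurePreserving_shearCons _ (measurePreserving_reflectAppend k s)
  have hinj : Function.Injective (minimalMatroidChart k s) :=
    shearCons_injective _ (reflectAppend_injective k s)
  rw [measureReal_convexHull_image_insert_zero_prod volume hchart hinj
      ((finite_cornerVertices k).prod (finite_cornerVertices s))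
      ((nonempty_cornerVertices k).prod (nonempty_cornerVertices s)),
    volume_real_convexHull_cornerVertices_prod, finrank_prod,
    finrank_fin_fun, finrank_fin_fun, Nat.cast_add]

end MinimalMatroid

/-- For `0 < r < n`, the normalized `(n-1)`-dimensional volume of the matroid base polytope
of the minimal matroid `T_{r,n}` equals `C(n-2, r-1)`.

The polytope `P(T_{r,n}) ⊆ ℝ^n` (the convex hull of the indicator vectors of the bases,
which are the `r`-subsets of `{1,…,n}` with at most one element in `{r+1,…,n}`) lies in the
hyperplane `x_1 + ⋯ + x_n = r`; forgetting the last coordinate is a lattice-preserving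
(unimodular) affine isomorphism onto a full-dimensional polytope in `ℝ^{n-1}`, and the
normalized volume is `(n-1)!` times the Lebesgue volume of that image. -/
theorem normalized_volume_minimal_matroid_polytope (n r : ℕ) (hr : 0 < r) (hrn : r < n) :
    (Nat.factorial (n - 1) : ℝ) *
      (volume (convexHull ℝ
        ((fun B : Finset ℕ => fun i : Fin (n - 1) => if i.val + 1 ∈ B then (1 : ℝ) else 0) ''
          {B : Finset ℕ | B ⊆ Finset.Icc 1 n ∧ B.card = r ∧
            (B ∩ Finset.Ioc r n).card ≤ 1}))).toReal =
      (Nat.choose (n - 2) (r - 1) : ℝ) := by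
  obtain ⟨k, rfl⟩ : ∃ k, r = k + 1 := ⟨r - 1, by omega⟩
  obtain ⟨s, rfl⟩ : ∃ s, n = k + s + 2 := ⟨n - (k + 2), by omega⟩
  change ((k + s + 1).factorial : ℝ) * volume.real (convexHull ℝ (indicatorVector (k + s + 1) ''
    {B | B ⊆ Finset.Icc 1 (k + s + 2) ∧ B.card = k + 1 ∧
      (B ∩ Finset.Ioc (k + 1) (k + s + 2)).card ≤ 1})) = (Nat.choose (k + s) k : ℝ)
  rw [indicatorVector_image_minimalMatroid_bases, volume_real_convexHull_image_minimalMatroidChart,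
    Nat.cast_add_choose, Nat.factorial_succ]
  push_cast
  field_simp
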